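/- ζ_so(1,1,1,1) = (1/2)·ζ(4) − 2·ζ(3,1; −1,1), where ζ(3,1;−1,1) = ∑_{m>n≥1} (−1)^m/(m^3 n). -/

import Mathlib

noncomputable def zetaSO (s1 s2 s3 s4 : ℕ) : ℝ :=
  ∑' (m : ℕ+) (n : ℕ+),
    1 / ((m : ℝ) ^ s1 * (n : ℝ) ^ s2 * ((m : ℝ) + (n : ℝ)) ^ s3 * ((m : ℝ) + 2 * (n : ℝ)) ^ s4)

noncomputable def rzeta (s : ℕ) : ℝ := ∑' m : ℕ+, 1 / (m : ℝ) ^ s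

/-- Depth-two alternating Euler sum `ζ(s1,s2; x1,x2)`, summing over `m1 = n + k > m2 = n ≥ 1`. -/
noncomputable def es2 (s1 s2 : ℕ) (x1 x2 : ℝ) : ℝ :=
  ∑' (n : ℕ+) (k : ℕ+),
    x1 ^ ((n : ℕ) + (k : ℕ)) * x2 ^ (n : ℕ) / (((n : ℝ) + (k : ℝ)) ^ s1 * (n : ℝ) ^ s2)

/-!
Sum both double series along the diagonals `m + n = M`, and write `h M = ∑ n < M, 1 / n`. On such
a diagonal partial fractions give
`1 / (m n (m + n) (m + 2 n)) = (1 / m + 2 / n - 1 / (M + n)) / (2 M ^ 3)`,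
and the last terms add up to `h (2 M) - h M - 1 / M`. With `a M = h M / M ^ 3` the diagonal sum is
therefore `1 / (2 M ^ 4) + 2 a M - 4 a (2 M)`. Finally `∑ a M = ζ(3,1; 1,1)`, and the terms of even
index add up to half of `ζ(3,1; 1,1) + ζ(3,1; -1,1)`, so that `ζ(3,1; 1,1)` cancels.
-/

open Finset

/-- Pairs of positive integers grouped by their sum: the pair `(n, M - n)`, with `1 ≤ n < M`, lies
on the diagonal `M`. -/
def sigmaIcoEquivPNatProd : (Σ M : ℕ, Ico 1 M) ≃ ℕ+ × ℕ+ where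
  toFun q := (⟨q.2, (mem_Ico.1 q.2.2).1⟩, ⟨q.1 - q.2, Nat.sub_pos_of_lt (mem_Ico.1 q.2.2).2⟩)
  invFun p := ⟨p.1 + p.2, p.1, mem_Ico.2 ⟨p.1.pos, Nat.lt_add_of_pos_right p.2.pos⟩⟩
  left_inv := by
    rintro ⟨M, n, hn⟩
    have hsum : n + (M - n) = M := Nat.add_sub_cancel' (mem_Ico.1 hn).2.le
    exact Sigma.subtype_ext hsum rfl
  right_inv p := Prod.ext rfl (PNat.eq (Nat.add_sub_cancel_left ..))

theorem hasSum_sum_Ico_of_summable_pnat {α : Type*} [AddCommGroup α] [UniformSpace α]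
    [IsUniformAddGroup α] [CompleteSpace α] [T2Space α] {f : ℕ → ℕ → α}
    (hf : Summable fun p : ℕ+ × ℕ+ => f p.1 p.2) :
    HasSum (fun M => ∑ n ∈ Ico 1 M, f n (M - n)) (∑' (m : ℕ+) (n : ℕ+), f m n) := by
  rw [← hf.tsum_prod]
  have hdiag := (sigmaIcoEquivPNatProd.hasSum_iff.2 hf.hasSum).sigma fun M => hasSum_fintype _
  convert hdiag using 2 with M
  exact (sum_coe_sort (Ico 1 M) fun n => f n (M - n)).symm

-- The exponent exceeds 1, so comparison with a product of two convergent `p`-series is possible.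
theorem rpow_three_halves_mul_le {a b : ℝ} (ha : 0 ≤ a) (hb : 0 ≤ b) :
    a ^ (3 / 2 : ℝ) * b ^ (3 / 2 : ℝ) ≤ (a + b) ^ 2 * a :=
  calc a ^ (3 / 2 : ℝ) * b ^ (3 / 2 : ℝ)
      = b ^ (3 / 2 : ℝ) * a ^ (1 / 2 : ℝ) * a := by
        rw [mul_assoc, ← Real.rpow_add_one' ha (by norm_num)]
        norm_num [mul_comm]
    _ ≤ (a + b) ^ (3 / 2 : ℝ) * (a + b) ^ (1 / 2 : ℝ) * a := by
        gcongr <;> linarith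
    _ = (a + b) ^ 2 * a := by
        rw [← Real.rpow_add_of_nonneg (by positivity) (by norm_num) (by norm_num)]
        norm_num

theorem summable_one_div_add_sq_mul :
    Summable fun p : ℕ+ × ℕ+ => 1 / (((p.1 : ℝ) + p.2) ^ 2 * p.1) := by
  have hrpow : Summable fun n : ℕ+ => 1 / (n : ℝ) ^ (3 / 2 : ℝ) :=
    summable_pnat_iff_summable_nat.2 (Real.summable_one_div_nat_rpow.2 (by norm_num))
  refine (hrpow.mul_of_nonneg hrpow (fun _ => by positivity) fun _ => by positivity).of_nonneg_of_le
    (fun _ => by positivity) fun p => ?_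
  rw [one_div_mul_one_div]
  exact one_div_le_one_div_of_le (by positivity)
    (rpow_three_halves_mul_le p.1.val.cast_nonneg p.2.val.cast_nonneg)

theorem one_le_pnat_cast (n : ℕ+) : (1 : ℝ) ≤ n := Nat.one_le_cast.2 n.pos

theorem summable_es2 {s1 s2 : ℕ} {x1 x2 : ℝ} (hs1 : 2 ≤ s1) (hs2 : s2 ≠ 0)
    (hx1 : |x1| ≤ 1) (hx2 : |x2| ≤ 1) :
    Summable fun p : ℕ+ × ℕ+ => x1 ^ ((p.1 : ℕ) + (p.2 : ℕ)) * x2 ^ (p.1 : ℕ) /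
      (((p.1 : ℝ) + (p.2 : ℝ)) ^ s1 * (p.1 : ℝ) ^ s2) := by
  refine summable_one_div_add_sq_mul.of_norm_bounded fun ⟨n, k⟩ => ?_
  have hn := one_le_pnat_cast n
  have hk := one_le_pnat_cast k
  rw [Real.norm_eq_abs, abs_div, abs_mul, abs_pow, abs_pow,
    abs_of_pos (by positivity : 0 < ((n : ℝ) + k) ^ s1 * (n : ℝ) ^ s2)]
  gcongr
  · exact mul_le_one₀ (pow_le_one₀ (abs_nonneg _) hx1) (by positivity)
      (pow_le_one₀ (abs_nonneg _) hx2)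
  · linarith
  · exact le_self_pow₀ hn hs2

theorem summable_zetaSO {s1 s3 s4 : ℕ} (s2 : ℕ) (hs1 : s1 ≠ 0) (hs3 : s3 ≠ 0) (hs4 : s4 ≠ 0) :
    Summable fun p : ℕ+ × ℕ+ => 1 / ((p.1 : ℝ) ^ s1 * (p.2 : ℝ) ^ s2 *
      ((p.1 : ℝ) + (p.2 : ℝ)) ^ s3 * ((p.1 : ℝ) + 2 * (p.2 : ℝ)) ^ s4) := by
  refine summable_one_div_add_sq_mul.of_nonneg_of_le (fun _ => by positivity) fun ⟨m, n⟩ => ?_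
  have hm := one_le_pnat_cast m
  have hn := one_le_pnat_cast n
  refine one_div_le_one_div_of_le (by positivity) ?_
  calc ((m : ℝ) + n) ^ 2 * m = m * 1 * (m + n) * (m + n) := by ring
    _ ≤ (m : ℝ) ^ s1 * (n : ℝ) ^ s2 * ((m : ℝ) + n) ^ s3 * ((m : ℝ) + 2 * n) ^ s4 := by
      gcongr
      · exact le_self_pow₀ hm hs1
      · exact one_le_pow₀ hn
      · exact le_self_pow₀ (by linarith) hs3
      · exact le_trans (by linarith) (le_self_pow₀ (by linarith) hs4)

theorem sum_Ico_es2 (s1 s2 : ℕ) (x1 x2 : ℝ) (M : ℕ) :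
    ∑ n ∈ Ico 1 M, x1 ^ (n + (M - n)) * x2 ^ n /
        (((n : ℝ) + (M - n : ℕ)) ^ s1 * (n : ℝ) ^ s2) =
      x1 ^ M * ((∑ n ∈ Ico 1 M, x2 ^ n / (n : ℝ) ^ s2) / (M : ℝ) ^ s1) := by
  rw [sum_div, mul_sum]
  refine sum_congr rfl fun n hn => ?_
  have hsum : n + (M - n) = M := Nat.add_sub_cancel' (mem_Ico.1 hn).2.le
  rw [← Nat.cast_add, hsum, div_div, mul_div_assoc, mul_comm ((n : ℝ) ^ s2)]

theorem hasSum_es2 {s1 s2 : ℕ} {x1 x2 : ℝ} (hs1 : 2 ≤ s1) (hs2 : s2 ≠ 0)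
    (hx1 : |x1| ≤ 1) (hx2 : |x2| ≤ 1) :
    HasSum (fun M : ℕ => x1 ^ M * ((∑ n ∈ Ico 1 M, x2 ^ n / (n : ℝ) ^ s2) / (M : ℝ) ^ s1))
      (es2 s1 s2 x1 x2) := by
  simp only [← sum_Ico_es2]
  exact hasSum_sum_Ico_of_summable_pnat (f := fun n k => x1 ^ (n + k) * x2 ^ n /
    (((n : ℝ) + (k : ℝ)) ^ s1 * (n : ℝ) ^ s2)) (summable_es2 hs1 hs2 hx1 hx2)

theorem hasSum_rzeta {s : ℕ} (hs : 1 < s) : HasSum (fun M : ℕ => 1 / (M : ℝ) ^ s) (rzeta s) := by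
  have hsum : Summable fun M : ℕ => 1 / (M : ℝ) ^ s := Real.summable_one_div_nat_pow.2 hs
  rw [rzeta, tsum_pnat_eq_tsum_succ (f := fun M : ℕ => 1 / (M : ℝ) ^ s)]
  convert hsum.hasSum using 1
  rw [hsum.tsum_eq_zero_add]
  simp [Nat.ne_zero_of_lt hs]

/-- The harmonic number `H_{M-1} = 1 + 1/2 + ⋯ + 1/(M-1)`, indexed by the strict upper bound `M` as
it occurs in Euler sums. -/
noncomputable def harmonicBelow (M : ℕ) : ℝ := ∑ n ∈ Ico 1 M, 1 / (n : ℝ)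

theorem sum_Ico_one_sub {α : Type*} [AddCommMonoid α] (f : ℕ → α) (M : ℕ) :
    ∑ n ∈ Ico 1 M, f (M - n) = ∑ n ∈ Ico 1 M, f n := by
  simpa using sum_Ico_reflect f 1 M.le_succ

theorem harmonicBelow_two_mul (M : ℕ) :
    harmonicBelow (2 * M) =
      harmonicBelow M + 1 / (M : ℝ) + ∑ n ∈ Ico 1 M, 1 / ((M : ℝ) + n) := by
  rcases M.eq_zero_or_pos with rfl | hM
  · simp [harmonicBelow]
  · have hupper : ∑ n ∈ Ico (M + 1) (2 * M), 1 / (n : ℝ) = ∑ n ∈ Ico 1 M, 1 / ((M : ℝ) + n) := by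
      rw [two_mul, add_comm M 1, ← sum_Ico_add]
      push_cast
      rfl
    rw [← hupper, harmonicBelow, harmonicBelow, ← sum_Ico_succ_top hM,
      sum_Ico_consecutive _ (by lia) (by lia)]

theorem one_div_mul_mul_add_mul_add_two_mul {K : Type*} [Field K] [LinearOrder K]
    [IsStrictOrderedRing K] {x y : K} (hx : 0 < x) (hy : 0 < y) :
    1 / (x * y * (x + y) * (x + 2 * y)) =
      (1 / x + 2 * (1 / y) - 1 / (x + y + y)) / (2 * (x + y) ^ 3) := by
  field_simp
  ring

theorem sum_Ico_zetaSO_one (M : ℕ) :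
    ∑ m ∈ Ico 1 M, 1 / ((m : ℝ) * (M - m : ℕ) * ((m : ℝ) + (M - m : ℕ)) *
        ((m : ℝ) + 2 * (M - m : ℕ))) =
      1 / 2 * (1 / (M : ℝ) ^ 4) + 2 * (harmonicBelow M / (M : ℝ) ^ 3) -
        4 * (harmonicBelow (2 * M) / ((2 * M : ℕ) : ℝ) ^ 3) := by
  have hterm : ∀ m ∈ Ico 1 M,
      1 / ((m : ℝ) * (M - m : ℕ) * ((m : ℝ) + (M - m : ℕ)) *
        ((m : ℝ) + 2 * (M - m : ℕ))) =
      (1 / (m : ℝ) + 2 * (1 / ((M - m : ℕ) : ℝ)) - 1 / ((M : ℝ) + (M - m : ℕ))) /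
        (2 * (M : ℝ) ^ 3) := by
    intro m hm
    obtain ⟨hm_pos, hmM⟩ := mem_Ico.1 hm
    have hsum : (m : ℝ) + (M - m : ℕ) = M := mod_cast Nat.add_sub_cancel' hmM.le
    rw [one_div_mul_mul_add_mul_add_two_mul (Nat.cast_pos.2 hm_pos)
      (Nat.cast_pos.2 (Nat.sub_pos_of_lt hmM)), hsum]
  have hupper : ∑ n ∈ Ico 1 M, 1 / ((M : ℝ) + n) =
      harmonicBelow (2 * M) - harmonicBelow M - 1 / (M : ℝ) := by
    rw [harmonicBelow_two_mul]
    ring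
  rw [sum_congr rfl hterm, ← sum_div, sum_sub_distrib, sum_add_distrib, ← mul_sum,
    sum_Ico_one_sub (fun n => 1 / (n : ℝ)), sum_Ico_one_sub (fun n => 1 / ((M : ℝ) + n)),
    hupper, ← harmonicBelow]
  push_cast
  ring

theorem hasSum_zetaSO_one :
    HasSum (fun M : ℕ => 1 / 2 * (1 / (M : ℝ) ^ 4) + 2 * (harmonicBelow M / (M : ℝ) ^ 3) -
        4 * (harmonicBelow (2 * M) / ((2 * M : ℕ) : ℝ) ^ 3)) (zetaSO 1 1 1 1) := by
  have hsummable := summable_zetaSO 1 one_ne_zero one_ne_zero one_ne_zero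
  simp only [pow_one] at hsummable
  simp only [← sum_Ico_zetaSO_one, zetaSO, pow_one]
  exact hasSum_sum_Ico_of_summable_pnat
    (f := fun m n => 1 / ((m : ℝ) * n * ((m : ℝ) + n) * ((m : ℝ) + 2 * n))) hsummable

theorem hasSum_es2_harmonicBelow {s : ℕ} {x : ℝ} (hs : 2 ≤ s) (hx : |x| ≤ 1) :
    HasSum (fun M : ℕ => x ^ M * (harmonicBelow M / (M : ℝ) ^ s)) (es2 s 1 x 1) := by
  simpa only [harmonicBelow, one_pow, pow_one] using hasSum_es2 hs one_ne_zero hx abs_one.le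

theorem hasSum_two_mul_of_hasSum_alternating {K : Type*} [Field K] [NeZero (2 : K)]
    [TopologicalSpace K] [IsTopologicalRing K] {a : ℕ → K} {A B : K} (hA : HasSum a A)
    (hB : HasSum (fun n => (-1) ^ n * a n) B) : HasSum (fun n => a (2 * n)) ((A + B) / 2) := by
  have hodd : ∀ n ∉ Set.range (2 * · : ℕ → ℕ), (a n + (-1) ^ n * a n) / 2 = 0 := by
    intro n hn
    have hn_odd : Odd n := Nat.not_even_iff_odd.1 fun h => hn (h.two_dvd.imp fun _ => Eq.symm)
    simp [hn_odd.neg_one_pow]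
  have hmean := ((mul_right_injective₀ two_ne_zero).hasSum_iff hodd).2 ((hA.add hB).div_const 2)
  simpa [Function.comp_def] using hmean

theorem stmt17 : zetaSO 1 1 1 1 = (1 / 2) * rzeta 4 - 2 * es2 3 1 (-1) 1 := by
  have hplain : HasSum (fun M : ℕ => harmonicBelow M / (M : ℝ) ^ 3) (es2 3 1 1 1) := by
    simpa only [one_pow, one_mul] using
      hasSum_es2_harmonicBelow (s := 3) (x := 1) (by norm_num) abs_one.le
  have halternating := hasSum_es2_harmonicBelow (s := 3) (x := -1) (by norm_num) (by norm_num)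
  have heven := hasSum_two_mul_of_hasSum_alternating hplain halternating
  have hzeta := hasSum_rzeta (s := 4) (by norm_num)
  calc zetaSO 1 1 1 1
      = 1 / 2 * rzeta 4 + 2 * es2 3 1 1 1 - 4 * ((es2 3 1 1 1 + es2 3 1 (-1) 1) / 2) :=
        hasSum_zetaSO_one.unique
          (((hzeta.mul_left (1 / 2)).add (hplain.mul_left 2)).sub (heven.mul_left 4))
    _ = 1 / 2 * rzeta 4 - 2 * es2 3 1 (-1) 1 := by ring
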